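/- Let γ = 1/(3L_f) with L_f = L_ψ + L_ω, and assume additionally that h is β_h-Lipschitz. Let (y_t, z_t, x_t) be the iterates of the VR-TOS algorithm with uniform q-memorization and x̄_t = (∑_{k=0}^t x_k)/(t+1) the ergodic average. Then for any y* ∈ Fix(G_γ) and any minimizer x* of the primal objective P, E[P(x̄_t) − P(x*)] ≤ (10n/(q(t+1))) · [ (6L_f q/(20n))‖z_0 − x*‖² + (3L_f q/(2n))‖y_0 − y*‖² + (q/(15 n L_f))β_h² + H_0 ]. -/

import Mathlib

open Finset
open scoped RealInnerProductSpace

noncomputable section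

variable {p : ℕ}

/-- proper, lower semicontinuous, convex extended-real function. -/
structure ProperLscConvex (g : EuclideanSpace ℝ (Fin p) → EReal) : Prop where
  proper : ∃ x, g x ≠ ⊤
  ne_bot : ∀ x, g x ≠ ⊥
  lsc : LowerSemicontinuous g
  convex : ∀ x y : EuclideanSpace ℝ (Fin p), ∀ a b : ℝ, 0 ≤ a → 0 ≤ b → a + b = 1 →
    g (a • x + b • y) ≤ (a : EReal) * g x + (b : EReal) * g y

/-- `z = prox_{γ g}(x)`. -/
def IsProx (γ : ℝ) (g : EuclideanSpace ℝ (Fin p) → EReal) (x z : EuclideanSpace ℝ (Fin p)) : Prop :=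
  ∀ w, g z + (((1 / (2 * γ)) * ‖x - z‖ ^ 2 : ℝ) : EReal)
      ≤ g w + (((1 / (2 * γ)) * ‖x - w‖ ^ 2 : ℝ) : EReal)

/-- Fenchel conjugate. -/
def fconj (g : EuclideanSpace ℝ (Fin p) → EReal) (u : EuclideanSpace ℝ (Fin p)) : EReal :=
  ⨆ x, ((⟪x, u⟫ : ℝ) : EReal) - g x

/-- The Lagrangian `L(x, u) = f(x) + g(x) + ⟨x, u⟩ − h*(u)`. -/
def Lagr (f : EuclideanSpace ℝ (Fin p) → ℝ) (g h : EuclideanSpace ℝ (Fin p) → EReal)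
    (x u : EuclideanSpace ℝ (Fin p)) : EReal :=
  ((f x : ℝ) : EReal) + g x + ((⟪x, u⟫ : ℝ) : EReal) - fconj h u

/-- extension of a finite sequence of draws to an infinite one. -/
def extSeq {S : Type} [Inhabited S] (T : ℕ) (v : Fin T → S) : ℕ → S :=
  fun k => if hk : k < T then v ⟨k, hk⟩ else default

/-- probability of a finite sequence of independent draws with weights `w`. -/
def prodW {S : Type} [Fintype S] (w : S → ℝ) (T : ℕ) (v : Fin T → S) : ℝ :=
  ∏ k, w (v k)

section Aux

variable {E : Type*} [NormedAddCommGroup E] [InnerProductSpace ℝ E] [CompleteSpace E]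

lemma aux_line {φ : E → ℝ} {G : E → E} (hd : ∀ x, HasGradientAt φ (G x) x) (x d : E) (t : ℝ) :
    HasDerivAt (fun t : ℝ => φ (x + t • d)) ⟪G (x + t • d), d⟫ t := by
  have h1 : HasDerivAt (fun t : ℝ => x + t • d) d t := by
    simpa using ((hasDerivAt_id t).smul_const d).const_add x
  have h2 := (hd (x + t • d)).hasFDerivAt.comp_hasDerivAt t h1
  simpa [Function.comp_def] using h2

lemma aux_conv {φ : E → ℝ} {G : E → E} (hc : ConvexOn ℝ Set.univ φ)
    (hd : ∀ x, HasGradientAt φ (G x) x) (x y : E) :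
    φ x + ⟪G x, y - x⟫ ≤ φ y := by
  have hconv : ConvexOn ℝ Set.univ (fun t : ℝ => φ (x + t • (y - x))) := by
    refine ⟨convex_univ, fun s _ t _ a b ha hb hab => ?_⟩
    have := hc.2 (Set.mem_univ (x + s • (y - x))) (Set.mem_univ (x + t • (y - x))) ha hb hab
    convert this using 2
    have : x = a • x + b • x := by rw [← add_smul, hab, one_smul]
    nth_rewrite 1 [this]
    simp only [smul_eq_mul]
    module
  have h1 := aux_line hd x (y - x) 0
  have h2 := hconv.le_slope_of_hasDerivAt (Set.mem_univ 0) (Set.mem_univ 1) zero_lt_one h1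
  simp [slope] at h2
  linarith

lemma aux_descent {φ : E → ℝ} {G : E → E} {L : ℝ}
    (hd : ∀ x, HasGradientAt φ (G x) x) (hl : ∀ x y, ‖G x - G y‖ ≤ L * ‖x - y‖) (x y : E) :
    φ y ≤ φ x + ⟪G x, y - x⟫ + L / 2 * ‖y - x‖ ^ 2 := by
  set d := y - x with hdd
  have hder : ∀ t : ℝ, HasDerivAt
      (fun t : ℝ => φ (x + t • d) - t * ⟪G x, d⟫ - L / 2 * t ^ 2 * ‖d‖ ^ 2)
      (⟪G (x + t • d), d⟫ - ⟪G x, d⟫ - L * t * ‖d‖ ^ 2) t := by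
    intro t
    have h1 := aux_line hd x d t
    have h2 : HasDerivAt (fun t : ℝ => t * ⟪G x, d⟫) ⟪G x, d⟫ t := by
      simpa using (hasDerivAt_id t).mul_const ⟪G x, d⟫
    have h3 : HasDerivAt (fun t : ℝ => L / 2 * t ^ 2 * ‖d‖ ^ 2) (L * t * ‖d‖ ^ 2) t := by
      have := (((hasDerivAt_id t).pow 2).const_mul (L / 2)).mul_const (‖d‖ ^ 2)
      refine this.congr_deriv ?_
      simp only [id]; push_cast; ring
    exact (h1.sub h2).sub h3
  have hanti := antitoneOn_of_hasDerivWithinAt_nonpos (convex_Icc (0 : ℝ) 1)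
    (fun t _ => (hder t).continuousAt.continuousWithinAt)
    (fun t _ => (hder t).hasDerivWithinAt) (fun t ht => by
      rw [interior_Icc] at ht
      have h1 : ⟪G (x + t • d) - G x, d⟫ ≤ ‖G (x + t • d) - G x‖ * ‖d‖ := real_inner_le_norm _ _
      have h2 := hl (x + t • d) x
      rw [add_sub_cancel_left, norm_smul, Real.norm_of_nonneg ht.1.le] at h2
      rw [inner_sub_left] at h1
      nlinarith [norm_nonneg d])
  have := hanti (Set.left_mem_Icc.2 zero_le_one) (Set.right_mem_Icc.2 zero_le_one) zero_le_one
  simp [hdd] at this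
  linarith

lemma aux_coco {φ : E → ℝ} {G : E → E} {L : ℝ} (hL : 0 < L) (hc : ConvexOn ℝ Set.univ φ)
    (hd : ∀ x, HasGradientAt φ (G x) x) (hl : ∀ x y, ‖G x - G y‖ ≤ L * ‖x - y‖) (x y : E) :
    ‖G x - G y‖ ^ 2 ≤ 2 * L * (φ x - φ y - ⟪G y, x - y⟫) := by
  set d := G x - G y with hdd
  have h1 := aux_conv hc hd y (x - L⁻¹ • d)
  have h2 := aux_descent hd hl x (x - L⁻¹ • d)
  have e1 : x - L⁻¹ • d - x = - (L⁻¹ • d) := by abel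
  have e2 : x - L⁻¹ • d - y = (x - y) - L⁻¹ • d := by abel
  rw [e1, norm_neg, norm_smul, inner_neg_right, inner_smul_right, mul_pow] at h2
  rw [e2, inner_sub_right, inner_smul_right] at h1
  have h3 : ⟪G x, d⟫ - ⟪G y, d⟫ = ‖d‖ ^ 2 := by
    rw [← inner_sub_left, real_inner_self_eq_norm_sq]
  have h4 : ‖L⁻¹‖ ^ 2 = L⁻¹ * L⁻¹ := by rw [Real.norm_of_nonneg (by positivity)]; ring
  rw [h4] at h2
  have h5 : L * L⁻¹ = 1 := mul_inv_cancel₀ hL.ne'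
  have h6 : L / 2 * (L⁻¹ * L⁻¹ * ‖d‖ ^ 2) = L⁻¹ * ‖d‖ ^ 2 / 2 := by
    field_simp
  rw [h6] at h2
  have h7 : L⁻¹ * ‖d‖ ^ 2 / 2 ≤ φ x - φ y - ⟪G y, x - y⟫ := by
    have : L⁻¹ * ‖d‖ ^ 2 = L⁻¹ * ⟪G x, d⟫ - L⁻¹ * ⟪G y, d⟫ := by rw [← h3]; ring
    linarith
  have h8 : ‖d‖ ^ 2 = 2 * L * (L⁻¹ * ‖d‖ ^ 2 / 2) := by field_simp
  rw [h8]
  exact mul_le_mul_of_nonneg_left h7 (by positivity)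

lemma aux_subgrad {φ : E → ℝ} (hc : ConvexOn ℝ Set.univ φ) (hcont : Continuous φ) (x : E) :
    ∃ u : E, ∀ w, φ x + ⟪u, w - x⟫ ≤ φ w := by
  have hconv := hc.convex_strict_epigraph
  have hopen : IsOpen {p : E × ℝ | p.1 ∈ Set.univ ∧ φ p.1 < p.2} := by
    simp only [Set.mem_univ, true_and]
    exact isOpen_lt (hcont.comp continuous_fst) continuous_snd
  obtain ⟨F, hF⟩ := geometric_hahn_banach_open_point (x := (x, φ x)) hconv hopen (by simp)
  have hsplit : ∀ (w : E) (r : ℝ), F (w, r) = F (w, 0) + r * F (0, 1) := by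
    intro w r
    have : ((w, r) : E × ℝ) = (w, 0) + r • (0, 1) := by ext <;> simp
    rw [this, map_add, map_smul, smul_eq_mul]
  set c := F (0, 1) with hcdef
  have hcneg : c < 0 := by
    have := hF (x, φ x + 1) (by simp)
    rw [hsplit x (φ x + 1), hsplit x (φ x)] at this
    linarith
  let l : E →L[ℝ] ℝ := (-c)⁻¹ • (F.comp (ContinuousLinearMap.inl ℝ E ℝ))
  refine ⟨(InnerProductSpace.toDual ℝ E).symm l, fun w => ?_⟩
  rw [InnerProductSpace.toDual_symm_apply]
  have key : F (w, 0) + φ w * c ≤ F (x, 0) + φ x * c := by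
    refine le_of_forall_pos_le_add fun ε hε => ?_
    have := hF (w, φ w + ε / (-c)) (by simp; exact div_pos hε (by linarith))
    rw [hsplit w, hsplit x (φ x)] at this
    have h2 : ε / (-c) * c = -ε := by rw [div_neg, neg_mul, div_mul_cancel₀ _ hcneg.ne]
    nlinarith
  have hl : l (w - x) = (-c)⁻¹ * (F (w, 0) - F (x, 0)) := by
    simp only [l, map_sub]
    simp
    ring
  rw [hl]
  have : (-c)⁻¹ * (F (w, 0) - F (x, 0)) ≤ (-c)⁻¹ * ((-c) * (φ w - φ x)) :=
    mul_le_mul_of_nonneg_left (by linarith) (by simp; linarith)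
  rw [inv_mul_cancel_left₀ (by linarith)] at this
  linarith

lemma aux_subgrad_bound {φ : E → ℝ} {β : ℝ} (hlip : ∀ x y, φ x ≤ φ y + β * ‖x - y‖) {x u : E}
    (hβ : 0 ≤ β) (hu : ∀ w, φ x + ⟪u, w - x⟫ ≤ φ w) : ‖u‖ ≤ β := by
  have h1 := hu (x + u)
  have h2 := hlip (x + u) x
  rw [add_sub_cancel_left, real_inner_self_eq_norm_sq] at h1
  rw [add_sub_cancel_left] at h2
  by_contra hcon
  push Not at hcon
  nlinarith [norm_nonneg u]

end Aux

lemma plc_convexOn {g : EuclideanSpace ℝ (Fin p) → EReal} (hg : ProperLscConvex g) :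
    ConvexOn ℝ {x | g x ≠ ⊤} (fun x => (g x).toReal) := by
  have key : ∀ x y, g x ≠ ⊤ → g y ≠ ⊤ → ∀ a b : ℝ, 0 ≤ a → 0 ≤ b → a + b = 1 →
      g (a • x + b • y) ≤ ((a * (g x).toReal + b * (g y).toReal : ℝ) : EReal) := by
    intro x y hx hy a b ha hb hab
    have := hg.convex x y a b ha hb hab
    rw [← EReal.coe_toReal hx (hg.ne_bot x), ← EReal.coe_toReal hy (hg.ne_bot y)] at this
    exact_mod_cast this
  refine ⟨fun x hx y hy a b ha hb hab => ?_, fun x hx y hy a b ha hb hab => ?_⟩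
  · exact ne_top_of_le_ne_top (EReal.coe_ne_top _) (key x y hx hy a b ha hb hab)
  · have := key x y hx hy a b ha hb hab
    have h2 := ne_top_of_le_ne_top (EReal.coe_ne_top _) this
    rw [← EReal.coe_toReal h2 (hg.ne_bot _)] at this
    simpa using EReal.coe_le_coe_iff.1 this

lemma aux_small {K M : ℝ} (h : ∀ t : ℝ, 0 < t → t ≤ 1 → K ≤ t * M) : K ≤ 0 := by
  by_contra hK
  push Not at hK
  have hM : K ≤ M := by simpa using h 1 one_pos le_rfl
  have hM0 : 0 < M := by linarith
  have := h (K / (2 * M)) (by positivity) (by rw [div_le_one (by positivity)]; linarith)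
  have h2 : K / (2 * M) * M = K / 2 := by field_simp
  linarith

lemma prox_spec {g : EuclideanSpace ℝ (Fin p) → EReal} (hg : ProperLscConvex g) {γ : ℝ}
    (hγ : 0 < γ) {a z : EuclideanSpace ℝ (Fin p)} (hz : IsProx γ g a z) :
    g z ≠ ⊤ ∧ ∀ w, g w ≠ ⊤ → (g z).toReal + 1 / γ * ⟪a - z, w - z⟫ ≤ (g w).toReal := by
  have hfin : g z ≠ ⊤ := by
    obtain ⟨w, hw⟩ := hg.proper
    have h1 := hz w
    intro htop
    rw [htop, EReal.top_add_coe] at h1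
    rw [← EReal.coe_toReal hw (hg.ne_bot w), ← EReal.coe_add] at h1
    exact EReal.coe_ne_top _ (top_le_iff.1 h1)
  refine ⟨hfin, fun w hw => ?_⟩
  have hc := plc_convexOn hg
  have hreal : ∀ w, g w ≠ ⊤ → (g z).toReal + 1 / (2 * γ) * ‖a - z‖ ^ 2
      ≤ (g w).toReal + 1 / (2 * γ) * ‖a - w‖ ^ 2 := by
    intro w hw
    have h1 := hz w
    rw [← EReal.coe_toReal hw (hg.ne_bot w), ← EReal.coe_toReal hfin (hg.ne_bot z)] at h1
    exact_mod_cast h1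
  suffices h : (g z).toReal + 1 / γ * ⟪a - z, w - z⟫ - (g w).toReal ≤ 0 by linarith
  refine aux_small (M := 1 / (2 * γ) * ‖w - z‖ ^ 2) fun t ht ht1 => ?_
  have hm := hc.1 hfin hw (by linarith : 0 ≤ 1 - t) ht.le (by ring)
  have h1 := hreal _ hm
  have h2 := hc.2 hfin hw (by linarith : 0 ≤ 1 - t) ht.le (by ring)
  simp only [smul_eq_mul] at h2
  have e : a - ((1 - t) • z + t • w) = (a - z) - t • (w - z) := by module
  rw [e, norm_sub_sq_real (a - z), inner_smul_right, norm_smul, Real.norm_of_nonneg ht.le] at h1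
  have e2 : 1 / γ = 2 * (1 / (2 * γ)) := by field_simp
  rw [e2]
  set c := 1 / (2 * γ)
  have : t * ((g z).toReal + 2 * c * ⟪a - z, w - z⟫ - (g w).toReal) ≤ t * (t * (c * ‖w - z‖ ^ 2)) := by
    nlinarith
  exact le_of_mul_le_mul_left this ht

lemma ext_snoc {S : Type} [Inhabited S] (T : ℕ) (v : Fin T → S) (s : S) :
    extSeq (T + 1) (Fin.snoc (α := fun _ => S) v s) = Function.update (extSeq T v) T s := by
  funext k
  rcases lt_trichotomy k T with hk | hk | hk
  · rw [Function.update_of_ne hk.ne]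
    have hk' : k < T + 1 := by omega
    simp only [extSeq, hk, hk', dif_pos]
    have : (⟨k, hk'⟩ : Fin (T + 1)) = Fin.castSucc ⟨k, hk⟩ := rfl
    rw [this, Fin.snoc_castSucc]
  · subst hk
    simp only [extSeq, Function.update_self, Nat.lt_succ_self, dif_pos]
    have : (⟨k, Nat.lt_succ_self k⟩ : Fin (k + 1)) = Fin.last k := rfl
    rw [this, Fin.snoc_last]
  · rw [Function.update_of_ne hk.ne']
    have h1 : ¬ k < T := by omega
    have h2 : ¬ k < T + 1 := by omega
    simp [extSeq, h1, h2]

lemma supermart {S : Type} [Fintype S] [Inhabited S] (w : S → ℝ) (hw : ∀ s, 0 ≤ w s)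
    (W : ℕ → (ℕ → S) → ℝ)
    (hW : ∀ k r, ∑ s, w s * W (k + 1) (Function.update r k s) ≤ W k r) (T : ℕ) :
    ∑ v : Fin T → S, prodW w T v * W T (extSeq T v) ≤ W 0 (fun _ => default) := by
  induction T with
  | zero =>
    have : ∀ v : Fin 0 → S, extSeq 0 v = fun _ => default := by
      intro v; funext k; simp [extSeq]
    simp [prodW, this]
  | succ T ih =>
    refine le_trans ?_ ih
    rw [← (Fin.snocEquiv (fun _ => S)).sum_comp, Fintype.sum_prod_type, Finset.sum_comm]
    refine Finset.sum_le_sum fun v _ => ?_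
    have hnn : 0 ≤ prodW w T v := Finset.prod_nonneg fun k _ => hw _
    refine le_trans (le_of_eq ?_) (mul_le_mul_of_nonneg_left (hW T (extSeq T v)) hnn)
    rw [Finset.mul_sum]
    refine Finset.sum_congr rfl fun s _ => ?_
    have e : (Fin.snocEquiv (fun _ => S)) (s, v) = Fin.snoc (α := fun _ => S) v s := rfl
    rw [e, ext_snoc]
    have : prodW w (T + 1) (Fin.snoc (α := fun _ => S) v s) = prodW w T v * w s := by
      simp [prodW, Fin.prod_univ_castSucc]
    rw [this]; ring

lemma prodW_sum {S : Type} [Fintype S] [Inhabited S] (w : S → ℝ) (hw : ∀ s, 0 ≤ w s)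
    (hw1 : ∑ s, w s = 1) (T : ℕ) : ∑ v : Fin T → S, prodW w T v = 1 := by
  have h1 := supermart w hw (fun _ _ => 1) (fun k r => by simp [hw1]) T
  have h2 := supermart w hw (fun _ _ => -1) (fun k r => by simp [hw1]) T
  simp at h1 h2
  linarith
section Alg

variable {E : Type*} [NormedAddCommGroup E] [InnerProductSpace ℝ E]

lemma young {c : ℝ} (hc : 0 < c) (a b : E) : ⟪a, b⟫ ≤ c * ‖b‖ ^ 2 + 1 / (4 * c) * ‖a‖ ^ 2 := by
  have h1 := real_inner_le_norm a b
  have h2 : 0 ≤ (2 * c * ‖b‖ - ‖a‖) ^ 2 := sq_nonneg _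
  have h3 : c * ‖b‖ ^ 2 + 1 / (4 * c) * ‖a‖ ^ 2 - ‖a‖ * ‖b‖
      = 1 / (4 * c) * (2 * c * ‖b‖ - ‖a‖) ^ 2 := by field_simp; ring
  have h4 : 0 ≤ 1 / (4 * c) * (2 * c * ‖b‖ - ‖a‖) ^ 2 := by positivity
  linarith

lemma path_main {L γ : ℝ} (hL : 0 < L) (hγ : γ = 1 / (3 * L)) (y z x v u zs xb Fz : E)
    {Gx Gs Hb Hz Hs fx fz fs : ℝ}
    (hG : Gx + 1 / γ * ⟪(2 • z - y - γ • v) - x, zs - x⟫ ≤ Gs)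
    (hH1 : Hz + 1 / γ * ⟪y - z, zs - z⟫ ≤ Hs)
    (hH2 : Hb + ⟪u, z - xb⟫ ≤ Hz)
    (hf : fx ≤ fz + ⟪Fz, x - z⟫ + L / 2 * ‖x - z‖ ^ 2) :
    fx + Gx + Hb + ⟪u, x - xb⟫ - (fs + Gs + Hs)
      ≤ 3 * L / 2 * (‖y - (zs + γ • u)‖ ^ 2 - ‖y + x - z - (zs + γ • u)‖ ^ 2)
        + (fz - fs - ⟪v, z - zs⟫ + 1 / (4 * L) * ‖Fz - v‖ ^ 2) := by
  obtain ⟨d, rfl⟩ : ∃ d, x = z + d := ⟨x - z, by abel⟩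
  obtain ⟨a, rfl⟩ : ∃ a, zs = z - a := ⟨z - zs, by abel⟩
  obtain ⟨e, rfl⟩ : ∃ e, y = z + e := ⟨y - z, by abel⟩
  have hg1 : 1 / γ = 3 * L := by rw [hγ]; field_simp
  have hg2 : 3 * L * γ = 1 := by rw [hγ]; field_simp
  have e1 : (2 • z - (z + e) - γ • v) - (z + d) = -(e + γ • v + d) := by module
  have e2 : z - a - (z + d) = -(a + d) := by abel
  have e3 : z + e - z = e := by abel
  have e4 : z - a - z = -a := by abel
  have e5 : z + d - z = d := by abel
  have e6 : z + e - (z - a + γ • u) = e + a - γ • u := by abel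
  have e7 : z + e + (z + d) - z - (z - a + γ • u) = (e + a - γ • u) + d := by abel
  have e8 : z - (z - a) = a := by abel
  have e9 : z + d - xb = (z - xb) + d := by abel
  rw [e1, e2, hg1, inner_neg_neg] at hG
  rw [e3, e4, hg1, inner_neg_right] at hH1
  rw [e5] at hf
  rw [e6, e7, e8, e9, norm_add_sq_real (e + a - γ • u) d, inner_add_right]
  have hy := young hL (Fz - v) d
  simp only [inner_add_left, inner_add_right, inner_sub_left, inner_smul_left, conj_trivial,
    real_inner_self_eq_norm_sq] at hG hy ⊢
  have c1 : ⟪d, a⟫ = ⟪a, d⟫ := real_inner_comm _ _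
  rw [c1] at hG
  have k1 : 3 * L * (γ * ⟪v, a⟫) = ⟪v, a⟫ := by rw [← mul_assoc, hg2, one_mul]
  have k2 : 3 * L * (γ * ⟪v, d⟫) = ⟪v, d⟫ := by rw [← mul_assoc, hg2, one_mul]
  have k3 : 3 * L * (γ * ⟪u, d⟫) = ⟪u, d⟫ := by rw [← mul_assoc, hg2, one_mul]
  linarith

lemma path_fix {L γ : ℝ} (hL : 0 < L) (hγ : γ = 1 / (3 * L)) (y z x v zs ys Fs : E)
    {Gx Gs Hz Hs : ℝ}
    (hG : Gx + 1 / γ * ⟪(2 • z - y - γ • v) - x, zs - x⟫ ≤ Gs)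
    (hG' : Gs + 1 / γ * ⟪(2 • zs - ys - γ • Fs) - zs, x - zs⟫ ≤ Gx)
    (hH : Hz + 1 / γ * ⟪y - z, zs - z⟫ ≤ Hs)
    (hH' : Hs + 1 / γ * ⟪ys - zs, z - zs⟫ ≤ Hz) :
    3 * L / 2 * ‖y + x - z - ys‖ ^ 2 ≤ 3 * L / 2 * ‖y - ys‖ ^ 2
      + (- ⟪v - Fs, z - zs⟫ + 1 / (6 * L) * ‖v - Fs‖ ^ 2) := by
  obtain ⟨d, rfl⟩ : ∃ d, x = z + d := ⟨x - z, by abel⟩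
  obtain ⟨a, rfl⟩ : ∃ a, z = zs + a := ⟨z - zs, by abel⟩
  obtain ⟨e, rfl⟩ : ∃ e, y = zs + a + e := ⟨y - (zs + a), by abel⟩
  obtain ⟨s, rfl⟩ : ∃ s, ys = zs + s := ⟨ys - zs, by abel⟩
  have hg1 : 1 / γ = 3 * L := by rw [hγ]; field_simp
  have hg2 : 3 * L * γ = 1 := by rw [hγ]; field_simp
  have e1 : (2 • (zs + a) - (zs + a + e) - γ • v) - (zs + a + d) = -(e + γ • v + d) := by module
  have e2 : zs - (zs + a + d) = -(a + d) := by abel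
  have e3 : (2 • zs - (zs + s) - γ • Fs) - zs = - (s + γ • Fs) := by module
  have e4 : zs + a + d - zs = a + d := by abel
  have e5 : zs + a + e - (zs + a) = e := by abel
  have e6 : zs - (zs + a) = - a := by abel
  have e7 : zs + s - zs = s := by abel
  have e8 : zs + a - zs = a := by abel
  have e9 : zs + a + e + (zs + a + d) - (zs + a) - (zs + s) = (a + e - s) + d := by abel
  have e10 : zs + a + e - (zs + s) = a + e - s := by abel
  rw [e1, e2, hg1, inner_neg_neg] at hG
  rw [e3, e4, hg1, inner_neg_left] at hG'
  rw [e5, e6, hg1, inner_neg_right] at hH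
  rw [e7, e8, hg1] at hH'
  rw [e8, e9, e10, norm_add_sq_real (a + e - s) d]
  have hy := young (c := 3 * L / 2) (by positivity) (-(v - Fs)) d
  rw [norm_neg, inner_neg_left] at hy
  have e11 : 1 / (4 * (3 * L / 2)) = 1 / (6 * L) := by congr 1; ring
  rw [e11] at hy
  simp only [inner_add_left, inner_add_right, inner_sub_left, inner_smul_left, conj_trivial,
    real_inner_self_eq_norm_sq] at hG hG' hy ⊢
  have c1 : ⟪d, a⟫ = ⟪a, d⟫ := real_inner_comm _ _
  rw [c1] at hG
  have k1 : 3 * L * (γ * ⟪v, a⟫) = ⟪v, a⟫ := by rw [← mul_assoc, hg2, one_mul]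
  have k2 : 3 * L * (γ * ⟪v, d⟫) = ⟪v, d⟫ := by rw [← mul_assoc, hg2, one_mul]
  have k3 : 3 * L * (γ * ⟪Fs, a⟫) = ⟪Fs, a⟫ := by rw [← mul_assoc, hg2, one_mul]
  have k4 : 3 * L * (γ * ⟪Fs, d⟫) = ⟪Fs, d⟫ := by rw [← mul_assoc, hg2, one_mul]
  linarith

lemma var_le {n : ℕ} (hn : 0 < n) (X : Fin n → E) :
    ∑ i, ‖X i - (n : ℝ)⁻¹ • ∑ j, X j‖ ^ 2 ≤ ∑ i, ‖X i‖ ^ 2 := by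
  set m := (n : ℝ)⁻¹ • ∑ j, X j with hm
  have hn' : (n : ℝ) ≠ 0 := by positivity
  have hs : ∑ j, X j = (n : ℝ) • m := by rw [hm, smul_inv_smul₀ hn']
  have : ∑ i, ‖X i - m‖ ^ 2 = ∑ i, ‖X i‖ ^ 2 - n * ‖m‖ ^ 2 := by
    simp only [norm_sub_sq_real, Finset.sum_add_distrib, Finset.sum_sub_distrib]
    rw [← Finset.mul_sum, ← sum_inner, hs, inner_smul_left, real_inner_self_eq_norm_sq]
    simp
    ring
  rw [this]
  have : 0 ≤ (n : ℝ) * ‖m‖ ^ 2 := by positivity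
  linarith

lemma two_sq (a b : E) : ‖a - b‖ ^ 2 ≤ 2 * ‖a‖ ^ 2 + 2 * ‖b‖ ^ 2 := by
  have h1 := norm_sub_le a b
  nlinarith [norm_nonneg (a - b), norm_nonneg a, norm_nonneg b, sq_nonneg (‖a‖ - ‖b‖)]

lemma exp_main {n : ℕ} (hn : 0 < n) {L : ℝ} (hL : 0 < L) (A α gs v : Fin n → E) (c Fz d : E) (D : ℝ)
    (hv : ∀ i, v i = A i - α i + (n : ℝ)⁻¹ • ∑ j, α j + c)
    (hF : Fz = (n : ℝ)⁻¹ • ∑ j, A j + c)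
    (hD : ∑ i, ‖A i - gs i‖ ^ 2 ≤ 2 * L * n * D) :
    (n : ℝ)⁻¹ * ∑ i, (- ⟪v i, d⟫ + 1 / (4 * L) * ‖Fz - v i‖ ^ 2)
      ≤ - ⟪Fz, d⟫ + D + 1 / (2 * n * L) * ∑ i, ‖α i - gs i‖ ^ 2 := by
  have hn' : (n : ℝ) ≠ 0 := by positivity
  have hnp : (0 : ℝ) < n := by positivity
  have hmean : (n : ℝ)⁻¹ * ∑ i, ⟪v i, d⟫ = ⟪Fz, d⟫ := by
    rw [← sum_inner]
    have : ∑ i, v i = (n : ℝ) • Fz := by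
      simp only [hv, Finset.sum_add_distrib, Finset.sum_sub_distrib, Finset.sum_const, hF,
        Finset.card_univ, Fintype.card_fin, ← Nat.cast_smul_eq_nsmul ℝ, smul_add]
      rw [smul_inv_smul₀ hn', smul_inv_smul₀ hn']
      abel
    rw [this, inner_smul_left]
    simp [hn']
  have hvar : ∑ i, ‖Fz - v i‖ ^ 2 ≤ 2 * (2 * L * n * D) + 2 * ∑ i, ‖α i - gs i‖ ^ 2 := by
    calc ∑ i, ‖Fz - v i‖ ^ 2
        = ∑ i, ‖(A i - α i) - (n : ℝ)⁻¹ • ∑ j, (A j - α j)‖ ^ 2 := by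
          refine Finset.sum_congr rfl fun i _ => ?_
          rw [← norm_neg, hF, hv, Finset.sum_sub_distrib, smul_sub]
          congr 2
          abel
      _ ≤ ∑ i, ‖A i - α i‖ ^ 2 := var_le hn _
      _ ≤ ∑ i, (2 * ‖A i - gs i‖ ^ 2 + 2 * ‖α i - gs i‖ ^ 2) := by
          refine Finset.sum_le_sum fun i _ => ?_
          have := two_sq (A i - gs i) (α i - gs i)
          rwa [sub_sub_sub_cancel_right] at this
      _ ≤ _ := by
          rw [Finset.sum_add_distrib, ← Finset.mul_sum, ← Finset.mul_sum]
          linarith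
  rw [Finset.sum_add_distrib, Finset.sum_neg_distrib, ← Finset.mul_sum, mul_add, mul_neg, hmean]
  have h1 : (n : ℝ)⁻¹ * (1 / (4 * L) * ∑ i, ‖Fz - v i‖ ^ 2)
      ≤ (n : ℝ)⁻¹ * (1 / (4 * L) * (2 * (2 * L * n * D) + 2 * ∑ i, ‖α i - gs i‖ ^ 2)) := by
    gcongr
  have h2 : (n : ℝ)⁻¹ * (1 / (4 * L) * (2 * (2 * L * n * D) + 2 * ∑ i, ‖α i - gs i‖ ^ 2))
      = D + 1 / (2 * n * L) * ∑ i, ‖α i - gs i‖ ^ 2 := by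
    field_simp
    ring
  linarith

lemma exp_fix {n : ℕ} (hn : 0 < n) {L : ℝ} (hL : 0 < L) (A α gs v : Fin n → E) (c cs Fz Fs d : E)
    (D : ℝ)
    (hv : ∀ i, v i = A i - α i + (n : ℝ)⁻¹ • ∑ j, α j + c)
    (hF : Fz = (n : ℝ)⁻¹ • ∑ j, A j + c)
    (hFs : Fs = (n : ℝ)⁻¹ • ∑ j, gs j + cs)
    (hD : ∑ i, ‖(A i + c) - (gs i + cs)‖ ^ 2 ≤ 2 * L * n * D) :
    (n : ℝ)⁻¹ * ∑ i, (- ⟪v i - Fs, d⟫ + 1 / (6 * L) * ‖v i - Fs‖ ^ 2)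
      ≤ - ⟪Fz - Fs, d⟫ + 2 / 3 * D + 2 / 3 * (1 / (2 * n * L) * ∑ i, ‖α i - gs i‖ ^ 2) := by
  have hn' : (n : ℝ) ≠ 0 := by positivity
  have hnp : (0 : ℝ) < n := by positivity
  have hmean : (n : ℝ)⁻¹ * ∑ i, ⟪v i - Fs, d⟫ = ⟪Fz - Fs, d⟫ := by
    rw [← sum_inner]
    have : ∑ i, (v i - Fs) = (n : ℝ) • (Fz - Fs) := by
      simp only [hv, Finset.sum_add_distrib, Finset.sum_sub_distrib, Finset.sum_const, hF,
        Finset.card_univ, Fintype.card_fin, ← Nat.cast_smul_eq_nsmul ℝ, smul_add, smul_sub]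
      rw [smul_inv_smul₀ hn', smul_inv_smul₀ hn']
      abel
    rw [this, inner_smul_left]
    simp [hn']
  have hvar : ∑ i, ‖v i - Fs‖ ^ 2 ≤ 2 * (2 * L * n * D) + 2 * ∑ i, ‖α i - gs i‖ ^ 2 := by
    calc ∑ i, ‖v i - Fs‖ ^ 2
        = ∑ i, ‖((A i + c) - (gs i + cs))
            - ((α i - gs i) - (n : ℝ)⁻¹ • ∑ j, (α j - gs j))‖ ^ 2 := by
          refine Finset.sum_congr rfl fun i _ => ?_
          rw [hFs, hv, Finset.sum_sub_distrib, smul_sub]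
          congr 2
          abel
      _ ≤ ∑ i, (2 * ‖(A i + c) - (gs i + cs)‖ ^ 2
            + 2 * ‖(α i - gs i) - (n : ℝ)⁻¹ • ∑ j, (α j - gs j)‖ ^ 2) :=
          Finset.sum_le_sum fun i _ => two_sq _ _
      _ ≤ _ := by
          rw [Finset.sum_add_distrib, ← Finset.mul_sum, ← Finset.mul_sum]
          have := var_le hn (fun i => α i - gs i)
          linarith
  rw [Finset.sum_add_distrib, Finset.sum_neg_distrib, ← Finset.mul_sum, mul_add, mul_neg, hmean]
  have h1 : (n : ℝ)⁻¹ * (1 / (6 * L) * ∑ i, ‖v i - Fs‖ ^ 2)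
      ≤ (n : ℝ)⁻¹ * (1 / (6 * L) * (2 * (2 * L * n * D) + 2 * ∑ i, ‖α i - gs i‖ ^ 2)) := by
    gcongr
  have h2 : (n : ℝ)⁻¹ * (1 / (6 * L) * (2 * (2 * L * n * D) + 2 * ∑ i, ‖α i - gs i‖ ^ 2))
      = 2 / 3 * D + 2 / 3 * (1 / (2 * n * L) * ∑ i, ‖α i - gs i‖ ^ 2) := by
    field_simp
    ring
  linarith

lemma sum_sel {S : Type} [Fintype S] {n : ℕ} (w : S → ℝ) (sel : S → Fin n)
    (hmargsel : ∀ i : Fin n, ∑ s ∈ univ.filter (fun s => sel s = i), w s = 1 / n)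
    (F : Fin n → ℝ) : ∑ s, w s * F (sel s) = (n : ℝ)⁻¹ * ∑ i, F i := by
  rw [← Finset.sum_fiberwise (s := univ) (g := sel), Finset.mul_sum]
  refine Finset.sum_congr rfl fun i _ => ?_
  rw [← one_div, ← hmargsel i, Finset.sum_mul]
  refine Finset.sum_congr rfl fun s hs => ?_
  rw [(Finset.mem_filter.1 hs).2]

lemma sum_upd {S : Type} [Fintype S] {n : ℕ} (w : S → ℝ) (hw1 : ∑ s, w s = 1)
    (upd : S → Finset (Fin n)) (q : ℝ)
    (hmargupd : ∀ j : Fin n, ∑ s ∈ univ.filter (fun s => j ∈ upd s), w s = q / n)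
    (A B : Fin n → E) :
    ∑ s, w s * ∑ j, ‖(if j ∈ upd s then A j else B j)‖ ^ 2
      = q / n * ∑ j, ‖A j‖ ^ 2 + (1 - q / n) * ∑ j, ‖B j‖ ^ 2 := by
  simp only [Finset.mul_sum]
  rw [Finset.sum_comm, ← Finset.sum_add_distrib]
  refine Finset.sum_congr rfl fun j _ => ?_
  have h1 := Finset.sum_filter_add_sum_filter_not univ (fun s => j ∈ upd s) w
  rw [hmargupd j, hw1] at h1
  have h2 : 1 - q / n = ∑ s ∈ univ.filter (fun s => j ∉ upd s), w s := by linarith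
  rw [h2, ← hmargupd j, Finset.sum_mul, Finset.sum_mul,
    ← Finset.sum_filter_add_sum_filter_not univ (fun s => j ∈ upd s)]
  congr 1
  · refine Finset.sum_congr rfl fun s hs => ?_
    rw [if_pos (Finset.mem_filter.1 hs).2]
  · refine Finset.sum_congr rfl fun s hs => ?_
    rw [if_neg (Finset.mem_filter.1 hs).2]

lemma final_norm {C : ℝ} (y0 yT ys yb : E) (hC : ‖ys - yb‖ ≤ 2 * C) :
    ‖y0 - yb‖ ^ 2 - ‖yT - yb‖ ^ 2 ≤ 5 * ‖y0 - ys‖ ^ 2 + ‖yT - ys‖ ^ 2 + 3 * C ^ 2 := by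
  have e1 : y0 - yb = (y0 - ys) + (ys - yb) := by abel
  have e2 : yT - yb = (yT - ys) + (ys - yb) := by abel
  rw [e1, e2, norm_add_sq_real, norm_add_sq_real]
  have h1 := real_inner_le_norm (y0 - ys) (ys - yb)
  have h2 := neg_le_of_abs_le (abs_real_inner_le_norm (yT - ys) (ys - yb))
  have h3 : ‖y0 - ys‖ * ‖ys - yb‖ ≤ ‖y0 - ys‖ * (2 * C) := by gcongr
  have h4 : ‖yT - ys‖ * ‖ys - yb‖ ≤ ‖yT - ys‖ * (2 * C) := by gcongr
  nlinarith [sq_nonneg (2 * ‖y0 - ys‖ - C), sq_nonneg (‖yT - ys‖ - C)]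

end Alg

lemma ereal_coe_sum {ι : Type*} (s : Finset ι) (F : ι → ℝ) :
    ((∑ i ∈ s, F i : ℝ) : EReal) = ∑ i ∈ s, (F i : EReal) := by
  classical
  induction s using Finset.induction_on with
  | empty => simp
  | insert a s ha ih => rw [Finset.sum_insert ha, Finset.sum_insert ha, EReal.coe_add, ih]

/-- Theorem 1, primal suboptimality rate of VR-TOS under a Lipschitz
assumption on `h`.  With `γ = 1/(3 L_f)` and `h` `β_h`-Lipschitz, for any fixed point `y*`
of `G_γ` and any minimizer `x*` of the primal objective `P = f + g + h`,
`E[P(x̄_t) − P(x*)] ≤ (10n/(q(t+1))) [ (6 L_f q/(20n))‖z_0 − x*‖²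
  + (3 L_f q/(2n))‖y_0 − y*‖² + (q/(15 n L_f)) β_h² + H_0 ]`. -/
theorem vrtos_primal_rate
    {n : ℕ} (hn : 0 < n)
    (ψ : Fin n → EuclideanSpace ℝ (Fin p) → ℝ)
    (gradψ : Fin n → EuclideanSpace ℝ (Fin p) → EuclideanSpace ℝ (Fin p))
    (Lψ : ℝ)
    (hψconv : ∀ i, ConvexOn ℝ Set.univ (ψ i))
    (hψdiff : ∀ i x, HasGradientAt (ψ i) (gradψ i x) x)
    (hψlip : ∀ i x y, ‖gradψ i x - gradψ i y‖ ≤ Lψ * ‖x - y‖)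
    (ω : EuclideanSpace ℝ (Fin p) → ℝ)
    (gradω : EuclideanSpace ℝ (Fin p) → EuclideanSpace ℝ (Fin p))
    (Lω : ℝ)
    (hωconv : ConvexOn ℝ Set.univ ω)
    (hωdiff : ∀ x, HasGradientAt ω (gradω x) x)
    (hωlip : ∀ x y, ‖gradω x - gradω y‖ ≤ Lω * ‖x - y‖)
    (Lf : ℝ) (hLf : Lf = Lψ + Lω) (hLfpos : 0 < Lf)
    (f : EuclideanSpace ℝ (Fin p) → ℝ)
    (hf : ∀ x, f x = (n : ℝ)⁻¹ * ∑ j, ψ j x + ω x)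
    (gradf : EuclideanSpace ℝ (Fin p) → EuclideanSpace ℝ (Fin p))
    (hgradf : ∀ x, gradf x = (n : ℝ)⁻¹ • ∑ j, gradψ j x + gradω x)
    -- the nonsmooth terms, their proximal operators, and the qualification condition
    (g h : EuclideanSpace ℝ (Fin p) → EReal)
    (hg : ProperLscConvex g) (hh : ProperLscConvex h)
    (hqual : (intrinsicInterior ℝ {x | g x ≠ ⊤} ∩ intrinsicInterior ℝ {x | h x ≠ ⊤}).Nonempty)
    -- `h` is `β_h`-Lipschitz
    (βh : ℝ) (hβh : 0 ≤ βh)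
    (hhlip : ∀ x y, h x ≤ h y + ((βh * ‖x - y‖ : ℝ) : EReal))
    -- the step size γ = 1/(3 L_f)
    (γ : ℝ) (hγ : γ = 1 / (3 * Lf))
    (proxg proxh : EuclideanSpace ℝ (Fin p) → EuclideanSpace ℝ (Fin p))
    (hproxg : ∀ x, IsProx γ g x (proxg x))
    (hproxh : ∀ x, IsProx γ h x (proxh x))
    -- a minimizer x* of the primal objective and a fixed point y* of G_γ
    (xstar : EuclideanSpace ℝ (Fin p))
    (hxstar : ∀ x, ((f xstar : ℝ) : EReal) + g xstar + h xstar
        ≤ ((f x : ℝ) : EReal) + g x + h x)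
    (ystar : EuclideanSpace ℝ (Fin p))
    (hfix : ystar - proxh ystar
        + proxg (2 • proxh ystar - ystar - γ • gradf (proxh ystar)) = ystar)
    -- the per-iteration randomness: the sampled index `sel s` and the uniform
    -- q-memorization update set `upd s`, drawn i.i.d. across iterations
    {S : Type} [Fintype S] [Inhabited S]
    (w : S → ℝ) (hw : ∀ s, 0 ≤ w s) (hw1 : ∑ s, w s = 1)
    (sel : S → Fin n) (upd : S → Finset (Fin n)) (q : ℝ) (hq : 0 < q)
    (hmargsel : ∀ i : Fin n, ∑ s ∈ univ.filter (fun s => sel s = i), w s = 1 / n)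
    (hmargupd : ∀ j : Fin n, ∑ s ∈ univ.filter (fun s => j ∈ upd s), w s = q / n)
    -- the VR-TOS process, as a function of the infinite sequence of draws
    (y z x v : ℕ → (ℕ → S) → EuclideanSpace ℝ (Fin p))
    (α : ℕ → Fin n → (ℕ → S) → EuclideanSpace ℝ (Fin p))
    (y0 : EuclideanSpace ℝ (Fin p)) (hy0 : ∀ r, y 0 r = y0)
    (α0 : Fin n → EuclideanSpace ℝ (Fin p)) (hα0 : ∀ j r, α 0 j r = α0 j)
    (hz : ∀ t r, z t r = proxh (y t r))
    (hv : ∀ t r, v t r = gradψ (sel (r t)) (z t r) - α t (sel (r t)) r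
        + (n : ℝ)⁻¹ • ∑ j, α t j r + gradω (z t r))
    (hx : ∀ t r, x t r = proxg (2 • z t r - y t r - γ • v t r))
    (hy : ∀ t r, y (t + 1) r = y t r + x t r - z t r)
    (hα : ∀ t j r, α (t + 1) j r
        = if j ∈ upd (r t) then gradψ j (z t r) else α t j r)
    -- the ergodic (averaged) primal iterate
    (xbar : ℕ → (ℕ → S) → EuclideanSpace ℝ (Fin p))
    (hxbar : ∀ t r, xbar t r = ((t : ℝ) + 1)⁻¹ • ∑ k ∈ Finset.range (t + 1), x k r)
    (z0 : EuclideanSpace ℝ (Fin p)) (hz0 : z0 = proxh y0)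
    (H0 : ℝ) (hH0 : H0 = 1 / (2 * n * Lf) * ∑ i, ‖α0 i - gradψ i xstar‖ ^ 2) :
    ∀ t : ℕ,
      ∑ vdraw : Fin (t + 1) → S,
          ((prodW w (t + 1) vdraw : ℝ) : EReal)
            * ((((f (xbar t (extSeq (t + 1) vdraw)) : ℝ) : EReal)
                  + g (xbar t (extSeq (t + 1) vdraw)) + h (xbar t (extSeq (t + 1) vdraw)))
                - (((f xstar : ℝ) : EReal) + g xstar + h xstar))
        ≤ ((10 * n / (q * (t + 1))
            * (6 * Lf * q / (20 * n) * ‖z0 - xstar‖ ^ 2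
              + 3 * Lf * q / (2 * n) * ‖y0 - ystar‖ ^ 2
              + q / (15 * n * Lf) * βh ^ 2 + H0) : ℝ) : EReal) := by
  intro t
  have hγpos : 0 < γ := by rw [hγ]; positivity
  have hnp : (0 : ℝ) < n := by exact_mod_cast hn
  have hnn : (n : ℝ) ≠ 0 := hnp.ne'
  -- real versions
  set G : EuclideanSpace ℝ (Fin p) → ℝ := fun x => (g x).toReal with hGdef
  set H : EuclideanSpace ℝ (Fin p) → ℝ := fun x => (h x).toReal with hHdef
  have hhfin : ∀ x, h x ≠ ⊤ := by
    intro x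
    obtain ⟨w0, hw0⟩ := hh.proper
    have h1 := hhlip x w0
    rw [← EReal.coe_toReal hw0 (hh.ne_bot w0), ← EReal.coe_add] at h1
    exact ne_top_of_le_ne_top (EReal.coe_ne_top _) h1
  have hHcoe : ∀ x, h x = (H x : EReal) := fun x => (EReal.coe_toReal (hhfin x) (hh.ne_bot x)).symm
  have hGcoe : ∀ x, g x ≠ ⊤ → g x = (G x : EReal) :=
    fun x hx => (EReal.coe_toReal hx (hg.ne_bot x)).symm
  have hHlip : ∀ x y, H x ≤ H y + βh * ‖x - y‖ := by
    intro x y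
    have h1 := hhlip x y
    rw [hHcoe x, hHcoe y] at h1
    exact_mod_cast h1
  have hGconv : ConvexOn ℝ {x | g x ≠ ⊤} G := plc_convexOn hg
  have hHconv : ConvexOn ℝ Set.univ H := by
    have h1 := plc_convexOn hh
    have h2 : {x | h x ≠ ⊤} = Set.univ := Set.eq_univ_of_forall hhfin
    rwa [h2] at h1
  have hHcont : Continuous H := by
    refine (LipschitzWith.of_dist_le_mul (K := βh.toNNReal) fun x y => ?_).continuous
    rw [Real.dist_eq, dist_eq_norm, abs_sub_le_iff]
    have h1 := hHlip x y
    have h2 := hHlip y x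
    rw [norm_sub_rev] at h2
    rw [Real.coe_toNNReal _ hβh]
    constructor <;> linarith
  have pg : ∀ a, g (proxg a) ≠ ⊤ ∧ ∀ w, g w ≠ ⊤ →
      G (proxg a) + 1 / γ * ⟪a - proxg a, w - proxg a⟫ ≤ G w :=
    fun a => prox_spec hg hγpos (hproxg a)
  have ph : ∀ a w, H (proxh a) + 1 / γ * ⟪a - proxh a, w - proxh a⟫ ≤ H w :=
    fun a w => (prox_spec hh hγpos (hproxh a)).2 w (hhfin w)
  -- smoothness
  have hLψ : ∀ i x y, ‖gradψ i x - gradψ i y‖ ≤ Lf * ‖x - y‖ := by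
    intro i x y
    have h1 := hψlip i x y
    have h2 := hωlip x y
    have h3 := norm_nonneg (gradω x - gradω y)
    rw [hLf, add_mul]; linarith
  have hLφ : ∀ i x y, ‖(gradψ i x + gradω x) - (gradψ i y + gradω y)‖ ≤ Lf * ‖x - y‖ := by
    intro i x y
    have h1 := hψlip i x y
    have h2 := hωlip x y
    have h3 := norm_add_le (gradψ i x - gradψ i y) (gradω x - gradω y)
    rw [sub_add_sub_comm] at h3
    rw [hLf, add_mul]; linarith
  have hφd : ∀ i x, HasGradientAt (fun x => ψ i x + ω x) (gradψ i x + gradω x) x := by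
    intro i x
    rw [hasGradientAt_iff_hasFDerivAt, map_add]
    exact (hψdiff i x).hasFDerivAt.add (hωdiff x).hasFDerivAt
  have hφc : ∀ i, ConvexOn ℝ Set.univ (fun x => ψ i x + ω x) := fun i => (hψconv i).add hωconv
  have hinner : ∀ a b, ⟪gradf a, b⟫ = (n : ℝ)⁻¹ * ∑ j, ⟪gradψ j a, b⟫ + ⟪gradω a, b⟫ := by
    intro a b
    rw [hgradf, inner_add_left, inner_smul_left, sum_inner]; simp
  have hDf : ∀ a b, (∑ i, (ψ i a - ψ i b - ⟪gradψ i b, a - b⟫))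
      + n * (ω a - ω b - ⟪gradω b, a - b⟫) = n * (f a - f b - ⟪gradf b, a - b⟫) := by
    intro a b
    rw [hf, hf, hinner, Finset.sum_sub_distrib, Finset.sum_sub_distrib]
    field_simp
    ring
  have hDf' : ∀ a b, (∑ i, ((ψ i a + ω a) - (ψ i b + ω b) - ⟪gradψ i b + gradω b, a - b⟫))
      = n * (f a - f b - ⟪gradf b, a - b⟫) := by
    intro a b
    rw [← hDf]
    simp only [inner_add_left, Finset.sum_sub_distrib, Finset.sum_add_distrib, Finset.sum_const,
      Finset.card_univ, Fintype.card_fin, nsmul_eq_mul]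
    ring
  have hωD : ∀ a b, 0 ≤ ω a - ω b - ⟪gradω b, a - b⟫ := by
    intro a b
    have := aux_conv hωconv hωdiff b a
    linarith
  have hψD : ∀ i a b, 0 ≤ ψ i a - ψ i b - ⟪gradψ i b, a - b⟫ := by
    intro i a b
    have := aux_conv (hψconv i) (hψdiff i) b a
    linarith
  have cocoψ : ∀ i a b, ‖gradψ i a - gradψ i b‖ ^ 2
      ≤ 2 * Lf * (ψ i a - ψ i b - ⟪gradψ i b, a - b⟫) :=
    fun i a b => aux_coco hLfpos (hψconv i) (hψdiff i) (hLψ i) a b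
  have sumψ : ∀ a b, ∑ i, ‖gradψ i a - gradψ i b‖ ^ 2
      ≤ 2 * Lf * n * (f a - f b - ⟪gradf b, a - b⟫) := by
    intro a b
    rw [mul_assoc, ← hDf]
    calc _ ≤ ∑ i, 2 * Lf * (ψ i a - ψ i b - ⟪gradψ i b, a - b⟫) :=
          Finset.sum_le_sum fun i _ => cocoψ i a b
      _ ≤ _ := by
          rw [← Finset.mul_sum]
          refine mul_le_mul_of_nonneg_left ?_ (by positivity)
          have := mul_nonneg hnp.le (hωD a b)
          linarith
  have sumφ : ∀ a b, ∑ i, ‖(gradψ i a + gradω a) - (gradψ i b + gradω b)‖ ^ 2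
      ≤ 2 * Lf * n * (f a - f b - ⟪gradf b, a - b⟫) := by
    intro a b
    rw [mul_assoc, ← hDf', Finset.mul_sum]
    exact Finset.sum_le_sum fun i _ => aux_coco hLfpos (hφc i) (hφd i) (hLφ i) a b
  have fdesc : ∀ a b, f b ≤ f a + ⟪gradf a, b - a⟫ + Lf / 2 * ‖b - a‖ ^ 2 := by
    intro a b
    have h1 : ∑ i, ((ψ i b + ω b) - (ψ i a + ω a) - ⟪gradψ i a + gradω a, b - a⟫)
        ≤ ∑ i : Fin n, Lf / 2 * ‖b - a‖ ^ 2 :=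
      Finset.sum_le_sum fun i _ => by
        have := aux_descent (hφd i) (hLφ i) a b
        linarith
    rw [hDf'] at h1
    simp only [Finset.sum_const, Finset.card_univ, Fintype.card_fin, nsmul_eq_mul] at h1
    have := le_of_mul_le_mul_left h1 hnp
    linarith
  have hfconv : ConvexOn ℝ Set.univ f := by
    refine ⟨convex_univ, fun a _ b _ s u hs hu hsu => ?_⟩
    have h1 : ∑ i, (ψ i (s • a + u • b) + ω (s • a + u • b))
        ≤ ∑ i, (s * (ψ i a + ω a) + u * (ψ i b + ω b)) :=
      Finset.sum_le_sum fun i _ => by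
        simpa using (hφc i).2 (Set.mem_univ a) (Set.mem_univ b) hs hu hsu
    have e : ∀ c, f c = (n : ℝ)⁻¹ * ∑ i, (ψ i c + ω c) := by
      intro c
      rw [hf, Finset.sum_add_distrib]
      simp only [Finset.sum_const, Finset.card_univ, Fintype.card_fin, nsmul_eq_mul]
      field_simp
    have h1' : ∑ i, (s * (ψ i a + ω a) + u * (ψ i b + ω b))
        = s * ∑ i, (ψ i a + ω a) + u * ∑ i, (ψ i b + ω b) := by
      rw [Finset.sum_add_distrib, ← Finset.mul_sum, ← Finset.mul_sum]
    rw [h1'] at h1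
    rw [e, e, e, smul_eq_mul, smul_eq_mul]
    have := mul_le_mul_of_nonneg_left h1 (inv_nonneg.2 hnp.le)
    linarith
  -- fixed point
  set zs := proxh ystar with hzs
  have hfix' : proxg (2 • zs - ystar - γ • gradf zs) = zs := by
    have h1 : proxg (2 • zs - ystar - γ • gradf zs)
        = (ystar - zs + proxg (2 • zs - ystar - γ • gradf zs)) - ystar + zs := by abel
    rw [hfix] at h1
    rw [h1]; abel
  have pgs := pg (2 • zs - ystar - γ • gradf zs)
  rw [hfix'] at pgs
  have hgzs : g zs ≠ ⊤ := pgs.1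
  have phs : ∀ w, H zs + 1 / γ * ⟪ystar - zs, w - zs⟫ ≤ H w := fun w => ph ystar w
  -- x* finite
  have hgxs : g xstar ≠ ⊤ := by
    intro htop
    have h1 := hxstar zs
    rw [htop, hGcoe zs hgzs, hHcoe zs, hHcoe xstar, EReal.coe_add_top, EReal.top_add_coe,
      ← EReal.coe_add, ← EReal.coe_add] at h1
    exact EReal.coe_ne_top _ (top_le_iff.1 h1)
  have hxle : f xstar + G xstar + H xstar ≤ f zs + G zs + H zs := by
    have h1 := hxstar zs
    rw [hGcoe zs hgzs, hHcoe zs, hHcoe xstar, hGcoe xstar hgxs] at h1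
    exact_mod_cast h1
  have hsub : ∀ w, g w ≠ ⊤ → f zs + G zs + H zs + (f w - f zs - ⟪gradf zs, w - zs⟫)
      ≤ f w + G w + H w := by
    intro w hw
    have h1 := pgs.2 w hw
    have h2 := phs w
    have e1 : 2 • zs - ystar - γ • gradf zs - zs = -(ystar - zs) - γ • gradf zs := by module
    rw [e1, inner_sub_left, inner_neg_left, inner_smul_left, conj_trivial] at h1
    have h3 : 1 / γ * (γ * ⟪gradf zs, w - zs⟫) = ⟪gradf zs, w - zs⟫ := by field_simp
    rw [mul_sub, h3] at h1
    linarith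
  have hDf0 : ∀ a b, 0 ≤ f a - f b - ⟪gradf b, a - b⟫ := by
    intro a b
    have h1 := sumψ a b
    have h2 : 0 ≤ ∑ i, ‖gradψ i a - gradψ i b‖ ^ 2 := Finset.sum_nonneg fun i _ => by positivity
    have h3 : 0 < 2 * Lf * n := by positivity
    exact nonneg_of_mul_nonneg_right (h2.trans h1) h3
  have hPeq : f xstar + G xstar + H xstar = f zs + G zs + H zs := by
    have h1 := hsub xstar hgxs
    have h2 := hDf0 xstar zs
    linarith
  have hgradeq : ∀ i, gradψ i xstar = gradψ i zs := by
    have h1 := hsub xstar hgxs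
    have h2 := hDf0 xstar zs
    have h3 : f xstar - f zs - ⟪gradf zs, xstar - zs⟫ = 0 := by linarith
    have h4 := sumψ xstar zs
    rw [h3, mul_zero] at h4
    intro i
    have h5 := (Finset.single_le_sum (f := fun i => ‖gradψ i xstar - gradψ i zs‖ ^ 2)
      (fun i _ => by positivity) (Finset.mem_univ i)).trans h4
    have h6 : ‖gradψ i xstar - gradψ i zs‖ = 0 := by
      have : ‖gradψ i xstar - gradψ i zs‖ ^ 2 = 0 := le_antisymm h5 (by positivity)
      exact pow_eq_zero_iff (two_ne_zero) |>.1 this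
    exact sub_eq_zero.1 (norm_eq_zero.1 h6)
  -- causality
  have caus : ∀ k (r r' : ℕ → S), (∀ j < k, r j = r' j) →
      y k r = y k r' ∧ ∀ j, α k j r = α k j r' := by
    intro k
    induction k with
    | zero => intro r r' _; simp [hy0, hα0]
    | succ k ih =>
      intro r r' hr
      obtain ⟨h1, h2⟩ := ih r r' (fun j hj => hr j (by omega))
      have h3 : r k = r' k := hr k (by omega)
      have h4 : z k r = z k r' := by rw [hz, hz, h1]
      have h5 : v k r = v k r' := by simp only [hv, h2, h3, h4]
      have h6 : x k r = x k r' := by simp only [hx, h1, h4, h5]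
      refine ⟨by rw [hy, hy, h1, h4, h6], fun j => ?_⟩
      rw [hα, hα, h3, h4, h2]
  have causu : ∀ k (r : ℕ → S) s, y k (Function.update r k s) = y k r ∧
      ∀ j, α k j (Function.update r k s) = α k j r :=
    fun k r s => caus k _ _ (fun j hj => Function.update_of_ne hj.ne _ _)
  set M : ℕ → (ℕ → S) → ℝ := fun k r =>
    f (z k r) - f zs - ⟪v k r, z k r - zs⟫ + 1 / (4 * Lf) * ‖gradf (z k r) - v k r‖ ^ 2 with hM
  have causM : ∀ k j (r : ℕ → S) s, j < k → M j (Function.update r k s) = M j r := by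
    intro k j r s hj
    obtain ⟨h1, h2⟩ := caus j (Function.update r k s) r
      (fun i hi => Function.update_of_ne (by omega) _ _)
    have h3 : (Function.update r k s) j = r j := Function.update_of_ne hj.ne _ _
    have h4 : z j (Function.update r k s) = z j r := by rw [hz, hz, h1]
    have h5 : v j (Function.update r k s) = v j r := by simp only [hv, h2, h3, h4]
    simp only [hM, h4, h5]
  set Hm : ℕ → (ℕ → S) → ℝ := fun k r =>
    1 / (2 * n * Lf) * ∑ i, ‖α k i r - gradψ i zs‖ ^ 2 with hHm
  have hHm0 : ∀ k r, 0 ≤ Hm k r := fun k r => by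
    simp only [hHm]
    exact mul_nonneg (by positivity) (Finset.sum_nonneg fun i _ => by positivity)
  set V : ℕ → (ℕ → S) → ℝ := fun k r =>
    3 * Lf / 2 * ‖y k r - ystar‖ ^ 2 + 4 / 3 * (n / q) * Hm k r with hV
  set W : ℕ → (ℕ → S) → ℝ := fun k r => ∑ j ∈ Finset.range k, M j r + 3 / 2 * V k r with hW
  have xfin : ∀ k r, g (x k r) ≠ ⊤ := fun k r => by rw [hx]; exact (pg _).1
  have hGx : ∀ k r w, g w ≠ ⊤ →
      G (x k r) + 1 / γ * ⟪(2 • z k r - y k r - γ • v k r) - x k r, w - x k r⟫ ≤ G w := by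
    intro k r w hw; rw [hx]; exact (pg _).2 w hw
  have hHz : ∀ k r w, H (z k r) + 1 / γ * ⟪y k r - z k r, w - z k r⟫ ≤ H w := by
    intro k r w; rw [hz]; exact ph _ w
  have hstep : ∀ k r, ∑ s, w s * W (k + 1) (Function.update r k s) ≤ W k r := by
    intro k r
    set zk := z k r with hzk
    set vi : Fin n → EuclideanSpace ℝ (Fin p) := fun i =>
      gradψ i zk - α k i r + (n : ℝ)⁻¹ • ∑ j, α k j r + gradω zk with hvi
    have ez : ∀ s, z k (Function.update r k s) = zk := by
      intro s; rw [hz, (causu k r s).1, ← hz]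
    have ev : ∀ s, v k (Function.update r k s) = vi (sel s) := by
      intro s
      simp only [hv, ez, (causu k r s).2, Function.update_self, hvi]
    have eM : ∀ s, M k (Function.update r k s) = f zk - f zs
        + (- ⟪vi (sel s), zk - zs⟫ + 1 / (4 * Lf) * ‖gradf zk - vi (sel s)‖ ^ 2) := by
      intro s
      simp only [hM, ez, ev]; ring
    have eY : ∀ s, 3 * Lf / 2 * ‖y (k + 1) (Function.update r k s) - ystar‖ ^ 2
        ≤ 3 * Lf / 2 * ‖y k r - ystar‖ ^ 2 + (- ⟪vi (sel s) - gradf zs, zk - zs⟫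
          + 1 / (6 * Lf) * ‖vi (sel s) - gradf zs‖ ^ 2) := by
      intro s
      have h1 := hGx k (Function.update r k s) zs hgzs
      have h2 := pgs.2 (x k (Function.update r k s)) (xfin _ _)
      have h3 := hHz k (Function.update r k s) zs
      have h4 := phs (z k (Function.update r k s))
      have := path_fix hLfpos hγ _ _ _ _ _ _ _ h1 h2 h3 h4
      rw [← hy, ez, ev, (causu k r s).1] at this
      exact this
    have eH : ∀ s, Hm (k + 1) (Function.update r k s) = 1 / (2 * n * Lf) *
        ∑ j, ‖(if j ∈ upd s then gradψ j zk - gradψ j zs else α k j r - gradψ j zs)‖ ^ 2 := by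
      intro s
      simp only [hHm]
      congr 1
      refine Finset.sum_congr rfl fun j _ => ?_
      rw [hα, Function.update_self, ez, (causu k r s).2]
      split_ifs <;> rfl
    have sH : ∑ s, w s * Hm (k + 1) (Function.update r k s)
        = q / n * (1 / (2 * n * Lf) * ∑ j, ‖gradψ j zk - gradψ j zs‖ ^ 2)
          + (1 - q / n) * Hm k r := by
      have h1 := sum_upd w hw1 upd q hmargupd (fun j => gradψ j zk - gradψ j zs)
        (fun j => α k j r - gradψ j zs)
      calc _ = 1 / (2 * n * Lf) * ∑ s, w s * ∑ j, ‖(if j ∈ upd s then gradψ j zk - gradψ j zs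
              else α k j r - gradψ j zs)‖ ^ 2 := by
            rw [Finset.mul_sum]
            refine Finset.sum_congr rfl fun s _ => ?_
            rw [eH]; ring
        _ = _ := by
            rw [h1]; simp only [hHm]; ring
    set K := 1 / (2 * n * Lf) * ∑ j, ‖gradψ j zk - gradψ j zs‖ ^ 2 with hK
    set a := f zs - f zk - ⟪gradf zk, zs - zk⟫ with ha
    set b := f zk - f zs - ⟪gradf zs, zk - zs⟫ with hb
    have h2nL : 0 < 2 * Lf * n := by positivity
    have hsa : ∑ j, ‖gradψ j zk - gradψ j zs‖ ^ 2 ≤ 2 * Lf * n * a := by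
      have := sumψ zs zk
      simpa only [norm_sub_rev] using this
    have hsb : ∑ j, ‖gradψ j zk - gradψ j zs‖ ^ 2 ≤ 2 * Lf * n * b := sumψ zk zs
    have hcanc : ∀ c : ℝ, 1 / (2 * n * Lf) * (2 * Lf * n * c) = c := by
      intro c; field_simp
    have hKa : K ≤ a := by
      rw [← hcanc a]; exact mul_le_mul_of_nonneg_left hsa (by positivity)
    have hKb : K ≤ b := by
      rw [← hcanc b]; exact mul_le_mul_of_nonneg_left hsb (by positivity)
    have hb0 : 0 ≤ b := hDf0 _ _
    have E1 := exp_main hn hLfpos (fun i => gradψ i zk) (fun i => α k i r) (fun i => gradψ i zs) vi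
      (gradω zk) (gradf zk) (zk - zs) a (fun i => rfl) (hgradf zk) hsa
    have E2 := exp_fix hn hLfpos (fun i => gradψ i zk) (fun i => α k i r) (fun i => gradψ i zs) vi
      (gradω zk) (gradω zs) (gradf zk) (gradf zs) (zk - zs) b (fun i => rfl) (hgradf zk)
      (hgradf zs) (sumφ zk zs)
    rw [← sum_sel w sel hmargsel
      (fun i => - ⟪vi i, zk - zs⟫ + 1 / (4 * Lf) * ‖gradf zk - vi i‖ ^ 2)] at E1
    rw [← sum_sel w sel hmargsel
      (fun i => - ⟪vi i - gradf zs, zk - zs⟫ + 1 / (6 * Lf) * ‖vi i - gradf zs‖ ^ 2)] at E2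
    have hHmk : 1 / (2 * n * Lf) * ∑ i, ‖α k i r - gradψ i zs‖ ^ 2 = Hm k r := rfl
    rw [hHmk] at E1 E2
    have hconst : ∀ c : ℝ, ∑ s, w s * c = c := by
      intro c; rw [← Finset.sum_mul, hw1, one_mul]
    have S1 : ∑ s, w s * M k (Function.update r k s) ≤ Hm k r := by
      simp only [eM, mul_add (w _) (f zk - f zs), Finset.sum_add_distrib, hconst]
      have : ⟪gradf zk, zs - zk⟫ = - ⟪gradf zk, zk - zs⟫ := by rw [← inner_neg_right, neg_sub]
      rw [this] at ha
      linarith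
    have S2 : ∑ s, w s * (3 * Lf / 2 * ‖y (k + 1) (Function.update r k s) - ystar‖ ^ 2)
        ≤ 3 * Lf / 2 * ‖y k r - ystar‖ ^ 2 - (a + b) + 2 / 3 * b + 2 / 3 * Hm k r := by
      have h1 : ∑ s, w s * (3 * Lf / 2 * ‖y (k + 1) (Function.update r k s) - ystar‖ ^ 2)
          ≤ ∑ s, w s * (3 * Lf / 2 * ‖y k r - ystar‖ ^ 2
            + (- ⟪vi (sel s) - gradf zs, zk - zs⟫
              + 1 / (6 * Lf) * ‖vi (sel s) - gradf zs‖ ^ 2)) :=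
        Finset.sum_le_sum fun s _ => mul_le_mul_of_nonneg_left (eY s) (hw s)
      simp only [mul_add (w _) (3 * Lf / 2 * ‖y k r - ystar‖ ^ 2), Finset.sum_add_distrib,
        hconst] at h1
      have h2 : ⟪gradf zk, zs - zk⟫ = - ⟪gradf zk, zk - zs⟫ := by rw [← inner_neg_right, neg_sub]
      rw [h2] at ha
      rw [inner_sub_left] at E2
      linarith
    have S3 : 4 / 3 * (n / q) * ∑ s, w s * Hm (k + 1) (Function.update r k s)
        = 4 / 3 * K + 4 / 3 * (n / q) * Hm k r - 4 / 3 * Hm k r := by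
      rw [sH]; field_simp; ring
    have S0 : ∀ s, W (k + 1) (Function.update r k s) = ∑ j ∈ Finset.range k, M j r
        + M k (Function.update r k s)
        + 3 / 2 * (3 * Lf / 2 * ‖y (k + 1) (Function.update r k s) - ystar‖ ^ 2)
        + 3 / 2 * (4 / 3 * (n / q)) * Hm (k + 1) (Function.update r k s) := by
      intro s
      simp only [hW, hV]
      rw [Finset.sum_range_succ, Finset.sum_congr rfl
        (fun j hj => causM k j r s (Finset.mem_range.1 hj))]
      ring
    have S4 : ∑ s, w s * W (k + 1) (Function.update r k s) = ∑ j ∈ Finset.range k, M j r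
        + ∑ s, w s * M k (Function.update r k s)
        + 3 / 2 * ∑ s, w s * (3 * Lf / 2 * ‖y (k + 1) (Function.update r k s) - ystar‖ ^ 2)
        + 3 / 2 * (4 / 3 * (n / q) * ∑ s, w s * Hm (k + 1) (Function.update r k s)) := by
      rw [← hconst (∑ j ∈ Finset.range k, M j r)]
      simp only [Finset.mul_sum, ← Finset.sum_add_distrib]
      refine Finset.sum_congr rfl fun s _ => ?_
      rw [S0, ← Finset.mul_sum]; ring
    rw [S4, S3]
    simp only [hW, hV]
    linarith
  have hsup := supermart w hw W hstep (t + 1)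
  have hW0 : W 0 (fun _ => default) = 3 / 2 * (3 * Lf / 2 * ‖y0 - ystar‖ ^ 2
      + 4 / 3 * (n / q) * H0) := by
    simp only [hW, hV, hHm, hH0, hgradeq, hy0, hα0, Finset.sum_range_zero, zero_add]
  rw [hW0] at hsup
  -- pathwise bound
  have hTpos : (0 : ℝ) < (t : ℝ) + 1 := by positivity
  have hwt0 : ∀ i ∈ Finset.range (t + 1), 0 ≤ ((t : ℝ) + 1)⁻¹ := fun _ _ => by positivity
  have hwt1 : ∑ i ∈ Finset.range (t + 1), ((t : ℝ) + 1)⁻¹ = 1 := by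
    simp; field_simp
  have xbfin : ∀ r, g (xbar t r) ≠ ⊤ := by
    intro r
    rw [hxbar, Finset.smul_sum]
    exact hGconv.1.sum_mem hwt0 hwt1 (fun i _ => xfin i r)
  have hpath : ∀ r, ((t : ℝ) + 1) * (f (xbar t r) + G (xbar t r) + H (xbar t r)
      - (f xstar + G xstar + H xstar))
      ≤ W (t + 1) r + 3 * Lf / 2 * (5 * ‖y0 - ystar‖ ^ 2 + 3 * (γ * βh) ^ 2) := by
    intro r
    set xb := xbar t r with hxb
    obtain ⟨u, hu⟩ := aux_subgrad hHconv hHcont xb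
    have hun : ‖u‖ ≤ βh := aux_subgrad_bound hHlip hβh hu
    have husn : ‖(1 / γ) • (ystar - zs)‖ ≤ βh := by
      refine aux_subgrad_bound hHlip hβh (x := zs) fun w => ?_
      rw [inner_smul_left]; exact phs w
    have hyb : ‖ystar - (zs + γ • u)‖ ≤ 2 * (γ * βh) := by
      have e : ystar - (zs + γ • u) = γ • ((1 / γ) • (ystar - zs) - u) := by
        rw [smul_sub, smul_smul, mul_one_div_cancel hγpos.ne', one_smul]; abel
      rw [e, norm_smul, Real.norm_of_nonneg hγpos.le]
      have := norm_sub_le ((1 / γ) • (ystar - zs)) u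
      nlinarith
    have hFx : ∀ φ : EuclideanSpace ℝ (Fin p) → ℝ, ConvexOn ℝ {x | g x ≠ ⊤} φ →
        ((t : ℝ) + 1) * φ xb ≤ ∑ k ∈ Finset.range (t + 1), φ (x k r) := by
      intro φ hφ
      have h1 := hφ.map_sum_le hwt0 hwt1 (fun i _ => xfin i r)
      rw [← Finset.smul_sum, ← hxbar, ← Finset.smul_sum, smul_eq_mul] at h1
      calc ((t : ℝ) + 1) * φ xb
          ≤ ((t : ℝ) + 1) * (((t : ℝ) + 1)⁻¹ * ∑ k ∈ Finset.range (t + 1), φ (x k r)) :=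
            mul_le_mul_of_nonneg_left h1 hTpos.le
        _ = _ := by rw [mul_inv_cancel_left₀ hTpos.ne']
    have hfx := hFx f (hfconv.subset (Set.subset_univ _) hGconv.1)
    have hgx := hFx G hGconv
    have husum : ∑ k ∈ Finset.range (t + 1), ⟪u, x k r - xb⟫ = 0 := by
      rw [← inner_sum, Finset.sum_sub_distrib]
      have : ∑ k ∈ Finset.range (t + 1), xb = ∑ k ∈ Finset.range (t + 1), x k r := by
        rw [Finset.sum_const, Finset.card_range, hxb, hxbar, ← Nat.cast_smul_eq_nsmul ℝ]
        push_cast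
        rw [smul_inv_smul₀ hTpos.ne']
      rw [this, sub_self, inner_zero_right]
    have hk : ∀ k, f (x k r) + G (x k r) + H xb + ⟪u, x k r - xb⟫ - (f zs + G zs + H zs)
        ≤ 3 * Lf / 2 * (‖y k r - (zs + γ • u)‖ ^ 2 - ‖y (k + 1) r - (zs + γ • u)‖ ^ 2)
          + M k r := by
      intro k
      have := path_main hLfpos hγ (y k r) (z k r) (x k r) (v k r) u zs xb (gradf (z k r))
        (fs := f zs) (hGx k r zs hgzs) (hHz k r zs) (hu (z k r)) (fdesc (z k r) (x k r))
      rw [← hy] at this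
      exact this
    have hsum := Finset.sum_le_sum (s := Finset.range (t + 1)) (fun k _ => hk k)
    have hl : ∑ k ∈ Finset.range (t + 1),
        (f (x k r) + G (x k r) + H xb + ⟪u, x k r - xb⟫ - (f zs + G zs + H zs))
        = ∑ k ∈ Finset.range (t + 1), f (x k r) + ∑ k ∈ Finset.range (t + 1), G (x k r)
          + ((t : ℝ) + 1) * H xb - ((t : ℝ) + 1) * (f zs + G zs + H zs) := by
      rw [Finset.sum_sub_distrib, Finset.sum_add_distrib, Finset.sum_add_distrib,
        Finset.sum_add_distrib, husum]
      simp only [Finset.sum_const, Finset.card_range, nsmul_eq_mul]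
      push_cast
      ring
    have hr : ∑ k ∈ Finset.range (t + 1),
        (3 * Lf / 2 * (‖y k r - (zs + γ • u)‖ ^ 2 - ‖y (k + 1) r - (zs + γ • u)‖ ^ 2)
          + M k r)
        = 3 * Lf / 2 * (‖y 0 r - (zs + γ • u)‖ ^ 2 - ‖y (t + 1) r - (zs + γ • u)‖ ^ 2)
          + ∑ k ∈ Finset.range (t + 1), M k r := by
      rw [Finset.sum_add_distrib, ← Finset.mul_sum,
        Finset.sum_range_sub' (fun k => ‖y k r - (zs + γ • u)‖ ^ 2)]
    rw [hl, hr, hy0] at hsum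
    have hfin := final_norm y0 (y (t + 1) r) ystar (zs + γ • u) hyb
    have hfin' := mul_le_mul_of_nonneg_left hfin (by positivity : 0 ≤ 3 * Lf / 2)
    have hVb : 3 * Lf / 2 * ‖y (t + 1) r - ystar‖ ^ 2 ≤ V (t + 1) r := by
      simp only [hV]
      have := mul_nonneg (by positivity : 0 ≤ 4 / 3 * ((n : ℝ) / q)) (hHm0 (t + 1) r)
      linarith
    have hV0 : 0 ≤ V (t + 1) r := le_trans (by positivity) hVb
    have hWe : W (t + 1) r = ∑ j ∈ Finset.range (t + 1), M j r + 3 / 2 * V (t + 1) r := rfl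
    rw [hWe, hPeq]
    linarith
  -- assemble
  have hterm : ∀ r, ((((f (xbar t r) : ℝ) : EReal) + g (xbar t r) + h (xbar t r))
      - (((f xstar : ℝ) : EReal) + g xstar + h xstar))
      = ((f (xbar t r) + G (xbar t r) + H (xbar t r)
          - (f xstar + G xstar + H xstar) : ℝ) : EReal) := by
    intro r
    rw [hGcoe _ (xbfin r), hHcoe, hGcoe _ hgxs, hHcoe]
    push_cast
    rfl
  simp only [hterm, ← EReal.coe_mul]
  rw [← ereal_coe_sum, EReal.coe_le_coe_iff]
  set Q := 3 * Lf / 2 * (5 * ‖y0 - ystar‖ ^ 2 + 3 * (γ * βh) ^ 2) with hQ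
  set Pg : (ℕ → S) → ℝ := fun r => f (xbar t r) + G (xbar t r) + H (xbar t r)
      - (f xstar + G xstar + H xstar) with hPg
  have hA : ((t : ℝ) + 1) * ∑ vd : Fin (t + 1) → S,
      prodW w (t + 1) vd * Pg (extSeq (t + 1) vd)
      ≤ 3 / 2 * (3 * Lf / 2 * ‖y0 - ystar‖ ^ 2 + 4 / 3 * (n / q) * H0) + Q := by
    calc _ = ∑ vd : Fin (t + 1) → S,
          prodW w (t + 1) vd * (((t : ℝ) + 1) * Pg (extSeq (t + 1) vd)) := by
          rw [Finset.mul_sum]; exact Finset.sum_congr rfl fun _ _ => by ring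
      _ ≤ ∑ vd : Fin (t + 1) → S, prodW w (t + 1) vd * (W (t + 1) (extSeq (t + 1) vd) + Q) :=
          Finset.sum_le_sum fun vd _ => mul_le_mul_of_nonneg_left (hpath _)
            (Finset.prod_nonneg fun k _ => hw _)
      _ ≤ _ := by
          simp only [mul_add (prodW _ _ _), Finset.sum_add_distrib]
          rw [← Finset.sum_mul, prodW_sum w hw hw1, one_mul]
          linarith
  have hH00 : 0 ≤ H0 := by
    rw [hH0]
    exact mul_nonneg (by positivity) (Finset.sum_nonneg fun i _ => by positivity)
  have hB : ∑ vd : Fin (t + 1) → S, prodW w (t + 1) vd * Pg (extSeq (t + 1) vd)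
      ≤ (3 / 2 * (3 * Lf / 2 * ‖y0 - ystar‖ ^ 2 + 4 / 3 * (n / q) * H0) + Q) / ((t : ℝ) + 1) := by
    rw [le_div_iff₀ hTpos, mul_comm]; exact hA
  refine hB.trans ?_
  have hR : (10 * n / (q * (t + 1))
            * (6 * Lf * q / (20 * n) * ‖z0 - xstar‖ ^ 2
              + 3 * Lf * q / (2 * n) * ‖y0 - ystar‖ ^ 2
              + q / (15 * n * Lf) * βh ^ 2 + H0) : ℝ)
      = (3 * Lf * ‖z0 - xstar‖ ^ 2 + 15 * Lf * ‖y0 - ystar‖ ^ 2 + 2 / (3 * Lf) * βh ^ 2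
          + 10 * (n / q) * H0) / ((t : ℝ) + 1) := by
    field_simp
    ring
  rw [hR]
  refine div_le_div_of_nonneg_right ?_ hTpos.le
  have hQ2 : Q = 15 * Lf / 2 * ‖y0 - ystar‖ ^ 2 + 1 / (2 * Lf) * βh ^ 2 := by
    rw [hQ, hγ]; field_simp; ring
  rw [hQ2]
  have i1 : 0 ≤ Lf * ‖z0 - xstar‖ ^ 2 := by positivity
  have i2 : 0 ≤ Lf * ‖y0 - ystar‖ ^ 2 := by positivity
  have i3 : 1 / (2 * Lf) * βh ^ 2 ≤ 2 / (3 * Lf) * βh ^ 2 := by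
    refine mul_le_mul_of_nonneg_right ?_ (by positivity)
    rw [div_le_div_iff₀ (by positivity) (by positivity)]
    linarith
  have i4 : 0 ≤ (n / q : ℝ) * H0 := by positivity
  linarith
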